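/- For all ξ, δ ∈ ℂ with ξ, δ, ξ+δ ∉ Λ and ℘(ξ) ≠ ℘(δ), one has ζ(ξ+δ) − ζ(ξ) − ζ(δ) = (1/2)·(℘′(ξ) − ℘′(δ))/(℘(ξ) − ℘(δ)). -/

import Mathlib

open scoped BigOperators

noncomputable section

/-- A period lattice in `ℂ` spanned by two `ℝ`-independent periods. -/
structure EllLattice where
  ω₁ : ℂ
  ω₂ : ℂ
  indep : ∀ a b : ℝ, a • ω₁ + b • ω₂ = 0 → a = 0 ∧ b = 0

namespace EllLattice

/-- Membership in the lattice `Λ = ℤω₁ + ℤω₂`. -/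
def mem (L : EllLattice) (z : ℂ) : Prop := ∃ m n : ℤ, z = m • L.ω₁ + n • L.ω₂

/-- The lattice point with integer coordinates `p = (m, n)`. -/
def per (L : EllLattice) (p : ℤ × ℤ) : ℂ := p.1 • L.ω₁ + p.2 • L.ω₂

/-- The Weierstrass sigma function associated to the lattice, defined by its
Hadamard product over the nonzero lattice points. -/
def sigma (L : EllLattice) (z : ℂ) : ℂ :=
  z * ∏' p : {p : ℤ × ℤ // p ≠ 0},
      ((1 - z / L.per p.1) *
        Complex.exp (z / L.per p.1 + z ^ 2 / (2 * (L.per p.1) ^ 2)))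

/-- The Weierstrass zeta function `ζ = σ′/σ`. -/
def zeta (L : EllLattice) (z : ℂ) : ℂ := deriv L.sigma z / L.sigma z

/-- The Weierstrass `℘`-function `℘ = −ζ′`. -/
def wp (L : EllLattice) (z : ℂ) : ℂ := - deriv L.zeta z

/-- `Φ_ξ(κ) = σ(ξ+κ)/(σ(ξ)σ(κ))`. -/
def Phi (L : EllLattice) (ξ κ : ℂ) : ℂ := L.sigma (ξ + κ) / (L.sigma ξ * L.sigma κ)

/-- The Lamé function `Ψ_ξ(κ) = Φ_ξ(κ)·e^{−ζ(ξ)κ}`. -/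
def Psi (L : EllLattice) (ξ κ : ℂ) : ℂ := L.Phi ξ κ * Complex.exp (-(L.zeta ξ) * κ)

/-- `η_δ(ξ) = ζ(ξ+δ) − ζ(ξ) − ζ(δ)`. -/
def eta (L : EllLattice) (δ ξ : ℂ) : ℂ := L.zeta (ξ + δ) - L.zeta ξ - L.zeta δ

/-- `χ_{α,β}(ξ) = ζ(α) + ζ(β) + ζ(ξ) − ζ(ξ+α+β)`. -/
def chi (L : EllLattice) (α β ξ : ℂ) : ℂ :=
  L.zeta α + L.zeta β + L.zeta ξ - L.zeta (ξ + α + β)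

end EllLattice

/-!
The quasi-periodicity of `ζ` makes `σ(z + l) = b exp(a z) σ(z)` for every period `l`, so that
`σ(ξ+δ)σ(ξ-δ)/σ(ξ)²` is an elliptic function of `ξ`. It is even with a double pole on `Λ`, and
adding `σ(δ)² ℘(ξ)` removes that pole; by Liouville the sum is constant, and its value at `ξ = δ`
gives `σ(ξ+δ)σ(ξ-δ) = -σ(ξ)²σ(δ)²(℘(ξ) - ℘(δ))`. Taking logarithmic derivatives in `ξ`,
`ζ(ξ+δ) + ζ(ξ-δ) = 2ζ(ξ) + ℘′(ξ)/(℘(ξ) - ℘(δ))`, and averaging this with the equation obtained by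
exchanging `ξ` and `δ` cancels the odd term `ζ(ξ-δ)`.
-/

open Filter Topology PeriodPair

section ComplexAnalysis

theorem tendsto_deriv_logDeriv {ι : Type*} {p : Filter ι} [p.NeBot] {f : ι → ℂ → ℂ} {g : ℂ → ℂ}
    {s : Set ℂ} {x : ℂ} (hs : IsOpen s) (hx : x ∈ s) (hf : TendstoLocallyUniformlyOn f g p s)
    (hd : ∀ᶠ n in p, DifferentiableOn ℂ (f n) s) (hg : g x ≠ 0) :
    Tendsto (fun n ↦ deriv (logDeriv (f n)) x) p (𝓝 (deriv (logDeriv g) x)) := by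
  have deriv_logDeriv {u : ℂ → ℂ} (hu : DifferentiableOn ℂ u s) (hux : u x ≠ 0) :
      deriv (logDeriv u) x = (deriv (deriv u) x * u x - deriv u x * deriv u x) / u x ^ 2 :=
    deriv_div ((hu.deriv hs).differentiableAt (hs.mem_nhds hx))
      (hu.differentiableAt (hs.mem_nhds hx)) hux
  have hf' : TendstoLocallyUniformlyOn (deriv ∘ f) (deriv g) p s := hf.deriv hd hs
  have hf'' : TendstoLocallyUniformlyOn (deriv ∘ deriv ∘ f) (deriv (deriv g)) p s :=
    hf'.deriv (hd.mono fun n hn ↦ hn.deriv hs) hs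
  have h0 := hf.tendsto_at hx
  have h1 := hf'.tendsto_at hx
  have h2 := hf''.tendsto_at hx
  rw [deriv_logDeriv (hf.differentiableOn hd hs) hg]
  refine ((((h2.mul h0).sub (h1.mul h1)).div (h0.pow 2) (pow_ne_zero 2 hg))).congr' ?_
  filter_upwards [hd, h0.eventually_ne hg] with n hn hnx
  exact (deriv_logDeriv hn hnx).symm

theorem hasSum_deriv_logDeriv_tprod {ι : Type*} {f : ι → ℂ → ℂ} {s : Set ℂ} {x : ℂ}
    (hs : IsOpen s) (hx : x ∈ s) (hd : ∀ i, DifferentiableOn ℂ (f i) s)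
    (hf : MultipliableLocallyUniformlyOn f s) (hfx : ∀ i, f i x ≠ 0) (hne : ∏' i, f i x ≠ 0) :
    HasSum (fun i ↦ deriv (logDeriv (f i)) x) (deriv (logDeriv (∏' i, f i ·)) x) := by
  have hdiff (i : ι) : ∀ᶠ y in 𝓝 x, DifferentiableAt ℂ (f i) y :=
    (hs.eventually_mem hx).mono fun y hy ↦ (hd i).differentiableAt (hs.mem_nhds hy)
  refine (tendsto_deriv_logDeriv hs hx hf.hasProdLocallyUniformlyOn
    (.of_forall fun t ↦ .fun_finsetProd fun i _ ↦ hd i) hne).congr fun t ↦ ?_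
  have hlog : logDeriv (∏ i ∈ t, f i ·) =ᶠ[𝓝 x] fun y ↦ ∑ i ∈ t, logDeriv (f i) y := by
    filter_upwards [t.eventually_all.mpr fun i _ ↦
        (hdiff i).self_of_nhds.continuousAt.eventually_ne (hfx i),
      t.eventually_all.mpr fun i _ ↦ hdiff i] with y hy hy'
    exact logDeriv_prod hy hy'
  rw [hlog.deriv_eq, deriv_fun_sum fun i _ ↦ ?_]
  have han : AnalyticAt ℂ (f i) x :=
    Complex.analyticAt_iff_eventually_differentiableAt.mpr (hdiff i)
  exact (han.deriv.div han (hfx i)).differentiableAt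

theorem deriv_zero_of_even {𝕜 E : Type*} [NontriviallyNormedField 𝕜] [CharZero 𝕜]
    [NormedAddCommGroup E] [NormedSpace 𝕜 E] {f : 𝕜 → E} (hf : f.Even) : deriv f 0 = 0 := by
  have h := deriv_comp_neg f 0
  rw [funext hf, neg_zero, eq_neg_iff_add_eq_zero, ← two_smul 𝕜] at h
  exact (smul_eq_zero_iff_right two_ne_zero).mp h

theorem exists_eq_add_sq_smul_of_even {𝕜 E : Type*} [NontriviallyNormedField 𝕜] [CharZero 𝕜]
    [NormedAddCommGroup E] [NormedSpace 𝕜 E] [CompleteSpace E] {f : 𝕜 → E}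
    (hf : AnalyticAt 𝕜 f 0) (heven : f.Even) :
    ∃ g, AnalyticAt 𝕜 g 0 ∧ ∀ᶠ z in 𝓝 0, f z = f 0 + z ^ 2 • g z := by
  have hf0 : AnalyticAt 𝕜 (fun z ↦ f z - f 0) 0 := by fun_prop
  have horder : ((2 : ℕ) : ℕ∞) ≤ analyticOrderAt (fun z ↦ f z - f 0) 0 := by
    rw [natCast_le_analyticOrderAt_iff_iteratedDeriv_eq_zero hf0]
    intro i hi
    interval_cases i
    · simp
    · simp [iteratedDeriv_one, deriv_zero_of_even heven]
  obtain ⟨g, hg, hfg⟩ := (natCast_le_analyticOrderAt hf0).mp horder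
  refine ⟨g, hg, hfg.mono fun z hz ↦ ?_⟩
  rw [← sub_eq_iff_eq_add', hz, sub_zero]

theorem apply_eq_apply_of_periodic_of_removable {E : Type*} [NormedAddCommGroup E]
    [NormedSpace ℂ E] (P : PeriodPair) {f g : ℂ → E}
    (hf : DifferentiableOn ℂ f (P.lattice : Set ℂ)ᶜ) (hper : ∀ l : P.lattice, f.Periodic l)
    (hg : DifferentiableAt ℂ g 0) (hfg : f =ᶠ[𝓝[≠] 0] g) {z w : ℂ} (hz : z ∉ P.lattice)
    (hw : w ∉ P.lattice) : f z = f w := by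
  classical
  let F : ℂ → E := fun z ↦ if z ∈ P.lattice then g 0 else f z
  have hF {z : ℂ} (hz : z ∉ P.lattice) : F z = f z := if_neg hz
  have hFper (z l : ℂ) (hl : l ∈ P.lattice) : F (z + l) = F z := by
    simp only [F, add_mem_cancel_right hl, hper ⟨l, hl⟩ z]
  have hFg : F =ᶠ[𝓝 0] g := by
    filter_upwards [P.compl_lattice_sdiff_singleton_mem_nhds 0,
      eventually_nhdsWithin_iff.mp hfg] with z hz hfgz
    by_cases h0 : z = 0
    · simp [F, h0]
    · exact (hF fun h ↦ hz ⟨h, h0⟩).trans (hfgz h0)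
  have hF0 : DifferentiableAt ℂ F 0 := hg.congr_of_eventuallyEq hFg
  have hFdiff : Differentiable ℂ F := by
    intro z
    by_cases hz : z ∈ P.lattice
    · have hshift : F = fun w ↦ F (w - z) :=
        funext fun w ↦ by simpa using (hFper (w - z) z hz)
      rw [hshift]
      exact .comp z (by simpa using hF0) (differentiableAt_id.sub_const z)
    · have hnhds : (P.lattice : Set ℂ)ᶜ ∈ 𝓝 z := P.isClosed_lattice.isOpen_compl.mem_nhds hz
      exact (hf.differentiableAt hnhds).congr_of_eventuallyEq
        (eventually_of_mem hnhds fun w hw ↦ hF hw)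
  rw [← hF hz, ← hF hw]
  exact hFdiff.apply_eq_apply_of_bounded
    (IsZLattice.isCompact_range_of_periodic P.lattice F hFdiff.continuous hFper).isBounded z w

end ComplexAnalysis

section ElementaryFactor

/-- The Weierstrass elementary factor `E₂(u) = (1 - u) exp(u + u²/2)`; the factor of the sigma
product at the period `l` is `z ↦ E₂(z / l)`, which Lean's `z / 0 = 0` makes equal to `1` for
`l = 0`. -/
def elementaryFactor (u : ℂ) : ℂ := (1 - u) * Complex.exp (u + u ^ 2 / 2)

@[simp]
lemma elementaryFactor_zero : elementaryFactor 0 = 1 := by simp [elementaryFactor]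

lemma elementaryFactor_eq_zero_iff {u : ℂ} : elementaryFactor u = 0 ↔ u = 1 := by
  rw [elementaryFactor, mul_eq_zero_iff_right (Complex.exp_ne_zero _), sub_eq_zero, eq_comm]

lemma differentiable_elementaryFactor : Differentiable ℂ elementaryFactor := by
  unfold elementaryFactor
  fun_prop

lemma differentiable_elementaryFactor_div (l : ℂ) :
    Differentiable ℂ fun z ↦ elementaryFactor (z / l) :=
  differentiable_elementaryFactor.comp (differentiable_id.div_const l)

lemma norm_elementaryFactor_sub_one_le {u : ℂ} (hu : ‖u‖ ≤ 1 / 2) :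
    ‖elementaryFactor u - 1‖ ≤ 2 * ‖u‖ ^ 3 := by
  set v := Complex.log (1 - u) + (u + u ^ 2 / 2) with hv
  have hu1 : 1 - u ≠ 0 := sub_ne_zero.mpr (by rintro rfl; norm_num at hu)
  have hexp : elementaryFactor u = Complex.exp v := by
    rw [hv, Complex.exp_add, Complex.exp_log hu1, elementaryFactor]
  have hv3 : ‖v‖ ≤ ‖u‖ ^ 3 := by
    have htaylor : v = Complex.log (1 + -u) - Complex.logTaylor 3 (-u) := by
      simp only [hv, Complex.logTaylor_succ, Complex.logTaylor_zero, Pi.add_apply,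
        Nat.cast_zero, div_zero, Nat.cast_one, Nat.cast_ofNat, Nat.reduceAdd]
      ring_nf
    have hinv : (1 - ‖u‖)⁻¹ ≤ 2 := inv_le_of_inv_le₀ (by norm_num) (by linarith)
    calc ‖v‖ ≤ ‖-u‖ ^ 3 * (1 - ‖-u‖)⁻¹ / ((2 : ℕ) + 1) :=
          htaylor ▸ Complex.norm_log_sub_logTaylor_le 2 (by rw [norm_neg]; linarith)
      _ ≤ ‖u‖ ^ 3 * 2 / 2 := by rw [norm_neg]; gcongr; norm_num
      _ = ‖u‖ ^ 3 := by ring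
  have hv1 : ‖v‖ ≤ 1 := hv3.trans (pow_le_one₀ (norm_nonneg u) (by linarith))
  rw [hexp]
  linarith [Complex.norm_exp_sub_one_le hv1]

lemma logDeriv_elementaryFactor {u : ℂ} (hu : u ≠ 1) :
    logDeriv elementaryFactor u = (u - 1)⁻¹ + (1 + u) := by
  have hexp : logDeriv (fun u ↦ Complex.exp (u + u ^ 2 / 2)) u = 1 + u := by
    have hq : HasDerivAt (fun u : ℂ ↦ u + u ^ 2 / 2) (1 + u) u := by
      simpa using! (hasDerivAt_id u).add ((hasDerivAt_pow 2 u).div_const 2)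
    rw [logDeriv_apply, hq.cexp.deriv, mul_div_cancel_left₀ _ (Complex.exp_ne_zero _)]
  have hlin : logDeriv (fun u : ℂ ↦ 1 - u) u = (u - 1)⁻¹ := by
    simp [logDeriv_apply, neg_div, ← inv_neg]
  rw [← hlin, ← hexp]
  exact logDeriv_mul u (sub_ne_zero.mpr hu.symm) (Complex.exp_ne_zero _) (by fun_prop)
    (by fun_prop)

lemma deriv_logDeriv_elementaryFactor {u : ℂ} (hu : u ≠ 1) :
    deriv (logDeriv elementaryFactor) u = 1 - 1 / (u - 1) ^ 2 := by
  have heq : logDeriv elementaryFactor =ᶠ[𝓝 u] fun u ↦ (u - 1)⁻¹ + (1 + u) :=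
    (eventually_ne_nhds hu).mono fun _ ↦ logDeriv_elementaryFactor
  have hder : HasDerivAt (fun u : ℂ ↦ (u - 1)⁻¹ + (1 + u)) (-1 / (u - 1) ^ 2 + 1) u :=
    (((hasDerivAt_id u).sub_const 1).inv (sub_ne_zero.mpr hu)).add
      ((hasDerivAt_id u).const_add 1)
  rw [heq.deriv_eq, hder.deriv]
  ring

lemma deriv_logDeriv_elementaryFactor_div {l z : ℂ} (hz : l = z → l = 0) :
    deriv (logDeriv fun z ↦ elementaryFactor (z / l)) z =
      if l = 0 then 0 else -(1 / (z - l) ^ 2 - 1 / l ^ 2) := by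
  split_ifs with hl
  · simp [hl, logDeriv_const]
  have hzl : l⁻¹ * z ≠ 1 := fun h ↦ hl (hz (by simpa [hl] using (inv_mul_eq_one₀ hl).mp h))
  have hscale : logDeriv (fun z ↦ elementaryFactor (z / l)) =
      fun z ↦ l⁻¹ * logDeriv elementaryFactor (l⁻¹ * z) := by
    ext w
    simp only [logDeriv_apply, div_eq_inv_mul _ l, deriv_comp_mul_left, smul_eq_mul, mul_div_assoc]
  have hsub : z - l ≠ 0 := sub_ne_zero.mpr fun h ↦ hl (hz h.symm)
  have hfactor : l⁻¹ * z - 1 = (z - l) / l := by field_simp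
  rw [hscale, deriv_const_mul_field, deriv_comp_mul_left, deriv_logDeriv_elementaryFactor hzl,
    hfactor, smul_eq_mul]
  field_simp
  ring

end ElementaryFactor
namespace EllLattice

variable (L : EllLattice)

/-- The pair of basic periods of `L` as a Mathlib `PeriodPair`, whose Weierstrass function `℘[·]`
is the one defined by its partial fraction expansion. -/
def toPeriodPair : PeriodPair where
  ω₁ := L.ω₁
  ω₂ := L.ω₂
  indep := LinearIndependent.pair_iff.mpr L.indep

/-- The lattice `Λ = ℤω₁ + ℤω₂` as a `ℤ`-submodule of `ℂ`. -/
abbrev lattice : Submodule ℤ ℂ := L.toPeriodPair.lattice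

lemma mem_iff_mem_lattice {z : ℂ} : L.mem z ↔ z ∈ L.lattice := by
  rw [PeriodPair.mem_lattice]
  simp [mem, toPeriodPair, eq_comm]

lemma compl_lattice_mem_nhds {z : ℂ} (hz : z ∉ L.lattice) : (L.lattice : Set ℂ)ᶜ ∈ 𝓝 z :=
  L.toPeriodPair.isClosed_lattice.isOpen_compl.mem_nhds hz

lemma isPreconnected_compl_lattice : IsPreconnected (L.lattice : Set ℂ)ᶜ := by
  have : Countable L.lattice :=
    L.toPeriodPair.latticeEquivProd.toEquiv.countable_iff.mpr inferInstance
  exact ((Set.to_countable (L.lattice : Set ℂ)).isConnected_compl_of_one_lt_rank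
    (by simp)).isPreconnected

/-- The quotient `σ(z) / z`, extended over `z = 0`: the canonical product of the elementary factors
of all periods, the one of the period `0` being `1`. -/
def sigmaProd (z : ℂ) : ℂ := ∏' l : L.lattice, elementaryFactor (z / l)

lemma sigma_eq_mul_sigmaProd (z : ℂ) : L.sigma z = z * L.sigmaProd z := by
  have hper (p : ℤ × ℤ) : (L.toPeriodPair.latticeEquivProd.symm.toEquiv p : ℂ) = L.per p := by
    simpa [per, toPeriodPair] using! L.toPeriodPair.latticeEquiv_symm_apply p
  have hfactor (l : ℂ) : (1 - z / l) * Complex.exp (z / l + z ^ 2 / (2 * l ^ 2)) =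
      elementaryFactor (z / l) := by
    rw [elementaryFactor, div_pow, div_div, mul_comm 2]
  have hsupp : (fun p ↦ elementaryFactor (z / L.per p)).mulSupport ⊆ {p | p ≠ 0} := by
    rintro p hp rfl
    simp [per] at hp
  rw [sigma, sigmaProd, ← L.toPeriodPair.latticeEquivProd.symm.toEquiv.tprod_eq]
  simp_rw [hper, hfactor]
  exact congrArg (z * ·) (tprod_subtype_eq_of_mulSupport_subset hsupp)

lemma summable_const_mul_norm_rpow (c : ℝ) : Summable fun l : L.lattice ↦ c * ‖l‖ ^ (-3 : ℝ) :=
  (ZLattice.summable_norm_rpow _ _ (by norm_num [finrank_lattice])).mul_left _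

lemma eventually_norm_elementaryFactor_div_sub_one_le (r : ℝ) :
    ∀ᶠ l : L.lattice in cofinite, ∀ z ∈ Metric.ball (0 : ℂ) r,
      ‖elementaryFactor (z / l) - 1‖ ≤ 2 * r ^ 3 * ‖l‖ ^ (-3 : ℝ) := by
  have hfinite : (Metric.closedBall (0 : L.lattice) (2 * r)).Finite :=
    isCompact_iff_finite.mp (isCompact_closedBall 0 (2 * r))
  filter_upwards [hfinite.eventually_cofinite_notMem] with l hl z hz
  rw [mem_closedBall_zero_iff, not_le] at hl
  rw [mem_ball_zero_iff] at hz
  have hl0 : 0 < ‖l‖ := by linarith [norm_nonneg z]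
  have hzl : ‖z / l‖ = ‖z‖ / ‖l‖ := norm_div z l
  have hhalf : ‖z / l‖ ≤ 1 / 2 := by
    rw [hzl, div_le_iff₀ hl0]
    linarith
  calc ‖elementaryFactor (z / l) - 1‖ ≤ 2 * (‖z‖ / ‖l‖) ^ 3 :=
        hzl ▸ norm_elementaryFactor_sub_one_le hhalf
    _ ≤ 2 * (r / ‖l‖) ^ 3 := by gcongr
    _ = 2 * r ^ 3 * ‖l‖ ^ (-3 : ℝ) := by
        rw [Real.rpow_neg hl0.le, Real.rpow_ofNat]
        ring

lemma multipliableLocallyUniformlyOn_elementaryFactor_div (r : ℝ) :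
    MultipliableLocallyUniformlyOn (fun (l : L.lattice) z ↦ elementaryFactor (z / l))
      (Metric.ball 0 r) := by
  have hcont (l : L.lattice) :
      ContinuousOn (fun z ↦ elementaryFactor (z / l) - 1) (Metric.ball 0 r) :=
    ((differentiable_elementaryFactor_div l).continuous.sub continuous_const).continuousOn
  simpa using Summable.multipliableLocallyUniformlyOn_one_add Metric.isOpen_ball
    (L.summable_const_mul_norm_rpow (2 * r ^ 3))
    (L.eventually_norm_elementaryFactor_div_sub_one_le r) hcont

lemma differentiable_sigmaProd : Differentiable ℂ L.sigmaProd := by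
  intro z
  have hball : DifferentiableOn ℂ L.sigmaProd (Metric.ball 0 (‖z‖ + 1)) :=
    (L.multipliableLocallyUniformlyOn_elementaryFactor_div _).hasProdLocallyUniformlyOn
      |>.differentiableOn (.of_forall fun _ ↦ .fun_finsetProd fun l _ ↦
        (differentiable_elementaryFactor_div l).differentiableOn) Metric.isOpen_ball
  exact hball.differentiableAt (Metric.isOpen_ball.mem_nhds (by simp))

lemma elementaryFactor_div_ne_zero {z : ℂ} (hz : z ∈ L.lattice → z = 0) (l : L.lattice) :
    elementaryFactor (z / l) ≠ 0 := by
  rw [Ne, elementaryFactor_eq_zero_iff]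
  intro h
  have hl : (l : ℂ) ≠ 0 := by
    intro hl
    simp [hl] at h
  have hzl : z = l := (div_eq_one_iff_eq hl).mp h
  exact hl (hzl ▸ hz (hzl ▸ l.2))

lemma sigmaProd_ne_zero {z : ℂ} (hz : z ∈ L.lattice → z = 0) : L.sigmaProd z ≠ 0 := by
  have hbound : ∀ᶠ l : L.lattice in cofinite,
      ‖‖elementaryFactor (z / l) - 1‖‖ ≤ 2 * (‖z‖ + 1) ^ 3 * ‖l‖ ^ (-3 : ℝ) := by
    filter_upwards [L.eventually_norm_elementaryFactor_div_sub_one_le (‖z‖ + 1)] with l hl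
    simpa using hl z (by simp)
  simpa [sigmaProd] using tprod_one_add_ne_zero_of_summable
    (f := fun l : L.lattice ↦ elementaryFactor (z / l) - 1)
    (by simpa using L.elementaryFactor_div_ne_zero hz)
    ((L.summable_const_mul_norm_rpow _).of_norm_bounded_eventually hbound)

@[simp]
lemma sigmaProd_zero : L.sigmaProd 0 = 1 := by simp [sigmaProd]

lemma sigmaProd_eq_zero {l : ℂ} (hl : l ∈ L.lattice) (hl0 : l ≠ 0) : L.sigmaProd l = 0 :=
  tprod_of_exists_eq_zero
    ⟨⟨l, hl⟩, elementaryFactor_eq_zero_iff.mpr (div_self hl0)⟩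

lemma sigmaProd_neg (z : ℂ) : L.sigmaProd (-z) = L.sigmaProd z := by
  rw [sigmaProd, ← (Equiv.neg L.lattice).tprod_eq]
  simp [sigmaProd]

lemma differentiable_sigma : Differentiable ℂ L.sigma := by
  rw [funext L.sigma_eq_mul_sigmaProd]
  exact differentiable_id.mul L.differentiable_sigmaProd

lemma sigma_eq_zero_iff {z : ℂ} : L.sigma z = 0 ↔ z ∈ L.lattice := by
  rw [sigma_eq_mul_sigmaProd, mul_eq_zero]
  constructor
  · rintro (rfl | hz)
    · exact zero_mem _
    · by_contra hmem
      exact L.sigmaProd_ne_zero (fun h ↦ absurd h hmem) hz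
  · exact fun hz ↦ or_iff_not_imp_left.mpr (L.sigmaProd_eq_zero hz)

lemma sigma_ne_zero {z : ℂ} (hz : z ∉ L.lattice) : L.sigma z ≠ 0 := L.sigma_eq_zero_iff.not.mpr hz

lemma sigma_neg (z : ℂ) : L.sigma (-z) = -L.sigma z := by
  simp only [sigma_eq_mul_sigmaProd, sigmaProd_neg, neg_mul]

lemma zeta_eq_logDeriv_sigma : L.zeta = logDeriv L.sigma := rfl

lemma zeta_neg (z : ℂ) : L.zeta (-z) = -L.zeta z := by
  have hderiv : deriv L.sigma (-z) = deriv L.sigma z := by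
    have h := deriv_comp_neg L.sigma z
    rwa [funext L.sigma_neg, deriv.fun_neg, neg_inj, eq_comm] at h
  rw [zeta, zeta, hderiv, sigma_neg, div_neg]

lemma analyticAt_zeta {z : ℂ} (hz : z ∉ L.lattice) : AnalyticAt ℂ L.zeta z :=
  (L.differentiable_sigma.analyticAt z).deriv.div (L.differentiable_sigma.analyticAt z)
    (L.sigma_ne_zero hz)

lemma deriv_logDeriv_sigmaProd {z : ℂ} (hz : z ∈ L.lattice → z = 0) :
    deriv (logDeriv L.sigmaProd) z = -℘[L.toPeriodPair - (0 : ℂ)] z := by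
  have hsum := hasSum_deriv_logDeriv_tprod (x := z) Metric.isOpen_ball (by simp)
    (fun l : L.lattice ↦ (differentiable_elementaryFactor_div l).differentiableOn)
    (L.multipliableLocallyUniformlyOn_elementaryFactor_div (‖z‖ + 1))
    (L.elementaryFactor_div_ne_zero hz) (L.sigmaProd_ne_zero hz)
  refine hsum.unique ((L.toPeriodPair.hasSum_weierstrassPExcept 0 z).neg.congr_fun fun l ↦ ?_)
  rw [deriv_logDeriv_elementaryFactor_div fun h ↦ h.trans (hz (h ▸ l.2))]
  split_ifs <;> simp

lemma weierstrassP_eq_one_div_sq_add (z : ℂ) :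
    ℘[L.toPeriodPair] z = 1 / z ^ 2 + ℘[L.toPeriodPair - (0 : ℂ)] z := by
  simpa [add_comm] using (L.toPeriodPair.weierstrassPExcept_add 0 z).symm

lemma wp_eq_weierstrassP {z : ℂ} (hz : z ∉ L.lattice) : L.wp z = ℘[L.toPeriodPair] z := by
  have hprod {w : ℂ} (hw : w ∉ L.lattice) : L.sigmaProd w ≠ 0 :=
    L.sigmaProd_ne_zero fun h ↦ absurd h hw
  have hne {w : ℂ} (hw : w ∉ L.lattice) : w ≠ 0 := fun h ↦ hw (h ▸ zero_mem _)
  have hzeta : L.zeta =ᶠ[𝓝 z] fun w ↦ w⁻¹ + logDeriv L.sigmaProd w := by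
    filter_upwards [L.compl_lattice_mem_nhds hz] with w hw
    rw [zeta_eq_logDeriv_sigma, funext L.sigma_eq_mul_sigmaProd,
      logDeriv_mul (f := fun w ↦ w) w (hne hw) (hprod hw) differentiableAt_fun_id
        (L.differentiable_sigmaProd w)]
    simp [logDeriv_apply]
  have hdiff : DifferentiableAt ℂ (logDeriv L.sigmaProd) z :=
    have hana := L.differentiable_sigmaProd.analyticAt z
    (hana.deriv.div hana (hprod hz)).differentiableAt
  rw [wp, hzeta.deriv_eq, deriv_fun_add (differentiableAt_inv (hne hz)) hdiff,
    L.deriv_logDeriv_sigmaProd fun h ↦ absurd h hz, deriv_inv, weierstrassP_eq_one_div_sq_add]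
  ring

lemma wp_add {z l : ℂ} (hz : z ∉ L.lattice) (hl : l ∈ L.lattice) : L.wp (z + l) = L.wp z := by
  rw [L.wp_eq_weierstrassP hz, L.wp_eq_weierstrassP (by rwa [add_mem_cancel_right hl])]
  exact L.toPeriodPair.weierstrassP_add_coe z ⟨l, hl⟩

lemma differentiableAt_wp {z : ℂ} (hz : z ∉ L.lattice) : DifferentiableAt ℂ L.wp z :=
  (L.analyticAt_zeta hz).deriv.neg.differentiableAt

lemma hasDerivAt_zeta {z : ℂ} (hz : z ∉ L.lattice) : HasDerivAt L.zeta (-L.wp z) z := by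
  rw [wp, neg_neg]
  exact (L.analyticAt_zeta hz).differentiableAt.hasDerivAt

lemma exists_zeta_add_eq {l : ℂ} (hl : l ∈ L.lattice) :
    ∃ a, ∀ z ∉ L.lattice, L.zeta (z + l) = L.zeta z + a := by
  have hderiv (z : ℂ) (hz : z ∈ (L.lattice : Set ℂ)ᶜ) :
      HasDerivAt (fun z ↦ L.zeta (z + l) - L.zeta z) 0 z := by
    have hzl : z + l ∉ L.lattice := by rwa [add_mem_cancel_right hl]
    simpa [L.wp_add hz hl] using!
      ((L.hasDerivAt_zeta hzl).comp_add_const z l).sub (L.hasDerivAt_zeta hz)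
  obtain ⟨a, ha⟩ := L.toPeriodPair.isClosed_lattice.isOpen_compl.exists_is_const_of_deriv_eq_zero
    L.isPreconnected_compl_lattice
    (fun z hz ↦ (hderiv z hz).differentiableAt.differentiableWithinAt)
    (fun z hz ↦ (hderiv z hz).deriv)
  exact ⟨a, fun z hz ↦ sub_eq_iff_eq_add'.mp (ha z hz)⟩

lemma exists_sigma_add_eq {l : ℂ} (hl : l ∈ L.lattice) :
    ∃ a b : ℂ, b ≠ 0 ∧ ∀ z, L.sigma (z + l) = b * Complex.exp (a * z) * L.sigma z := by
  obtain ⟨a, ha⟩ := L.exists_zeta_add_eq hl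
  have hmem {z : ℂ} : z + l ∈ L.lattice ↔ z ∈ L.lattice := add_mem_cancel_right hl
  have hshift : Differentiable ℂ fun z ↦ L.sigma (z + l) :=
    L.differentiable_sigma.comp (differentiable_id.add_const l)
  have hexp : Differentiable ℂ fun z ↦ Complex.exp (a * z) := by fun_prop
  have hlogexp (z : ℂ) : logDeriv (fun z ↦ Complex.exp (a * z)) z = a := by
    rw [logDeriv_apply, (hasDerivAt_const_mul a).cexp.deriv,
      mul_div_cancel_left₀ _ (Complex.exp_ne_zero _)]
  have hlog : Set.EqOn (logDeriv fun z ↦ L.sigma (z + l))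
      (logDeriv fun z ↦ Complex.exp (a * z) * L.sigma z) (L.lattice : Set ℂ)ᶜ := by
    intro z hz
    rw [logDeriv_mul (f := fun z ↦ Complex.exp (a * z)) z (Complex.exp_ne_zero _)
      (L.sigma_ne_zero hz) (hexp z) (L.differentiable_sigma z), hlogexp, add_comm, logDeriv_apply,
      deriv_comp_add_const]
    exact ha z hz
  obtain ⟨b, hb, hsigma⟩ := (logDeriv_eqOn_iff hshift.differentiableOn
    (hexp.mul L.differentiable_sigma).differentiableOn
    L.toPeriodPair.isClosed_lattice.isOpen_compl L.isPreconnected_compl_lattice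
    (fun z hz ↦ mul_ne_zero (Complex.exp_ne_zero (a * z)) (L.sigma_ne_zero hz))
    (fun z hz ↦ L.sigma_ne_zero (hmem.not.mpr hz))).mp hlog
  refine ⟨a, b, hb, fun z ↦ ?_⟩
  by_cases hz : z ∈ L.lattice
  · rw [L.sigma_eq_zero_iff.mpr hz, L.sigma_eq_zero_iff.mpr (hmem.mpr hz), mul_zero]
  · simpa [mul_assoc] using hsigma hz

/-- The elliptic function `ξ ↦ σ(ξ+δ)σ(ξ-δ)/σ(ξ)²`, with a double pole on `Λ` and zeros at `±δ`. -/
def sigmaRatio (δ ξ : ℂ) : ℂ := L.sigma (ξ + δ) * L.sigma (ξ - δ) / L.sigma ξ ^ 2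

lemma periodic_sigmaRatio (δ : ℂ) (l : L.lattice) : (L.sigmaRatio δ).Periodic l := by
  intro ξ
  obtain ⟨a, b, hb, hsigma⟩ := L.exists_sigma_add_eq l.2
  have hexp : Complex.exp (a * (ξ + δ)) * Complex.exp (a * (ξ - δ)) = Complex.exp (a * ξ) ^ 2 := by
    rw [← Complex.exp_add, ← Complex.exp_nat_mul]
    ring_nf
  calc L.sigmaRatio δ (ξ + l)
      = b ^ 2 * (Complex.exp (a * (ξ + δ)) * Complex.exp (a * (ξ - δ))) *
          (L.sigma (ξ + δ) * L.sigma (ξ - δ)) /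
          (b ^ 2 * Complex.exp (a * ξ) ^ 2 * L.sigma ξ ^ 2) := by
        rw [sigmaRatio, add_right_comm, add_sub_right_comm, hsigma, hsigma, hsigma]
        ring
    _ = L.sigmaRatio δ ξ := by
        rw [hexp]
        exact mul_div_mul_left _ _ (mul_ne_zero (pow_ne_zero 2 hb)
          (pow_ne_zero 2 (Complex.exp_ne_zero _)))

lemma differentiableOn_sigmaRatio (δ : ℂ) :
    DifferentiableOn ℂ (L.sigmaRatio δ) (L.lattice : Set ℂ)ᶜ := by
  have hσ := L.differentiable_sigma
  exact .div (by fun_prop) (by fun_prop) fun ξ hξ ↦ pow_ne_zero 2 (L.sigma_ne_zero hξ)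

lemma exists_sigmaRatio_eq (δ : ℂ) :
    ∃ g, AnalyticAt ℂ g 0 ∧ ∀ᶠ ξ in 𝓝[≠] 0, L.sigmaRatio δ ξ = -L.sigma δ ^ 2 / ξ ^ 2 + g ξ := by
  let φ : ℂ → ℂ := fun ξ ↦ L.sigma (ξ + δ) * L.sigma (ξ - δ) / L.sigmaProd ξ ^ 2
  have hφ : AnalyticAt ℂ φ 0 := by
    have hσ := L.differentiable_sigma
    exact .div (Differentiable.analyticAt (by fun_prop) 0)
      ((L.differentiable_sigmaProd.analyticAt 0).pow 2) (by simp)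
  have hφeven : φ.Even := fun ξ ↦ by
    have hadd : -ξ + δ = -(ξ - δ) := by ring
    simp only [φ, hadd, ← neg_add', sigma_neg, sigmaProd_neg]
    ring
  have hφ0 : φ 0 = -L.sigma δ ^ 2 := by
    simp [φ, sigma_neg, pow_two]
  obtain ⟨g, hg, hφg⟩ := exists_eq_add_sq_smul_of_even hφ hφeven
  refine ⟨g, hg, ?_⟩
  filter_upwards [hφg.filter_mono nhdsWithin_le_nhds, self_mem_nhdsWithin] with ξ hξ hξ0
  have hξ0 : ξ ≠ 0 := hξ0
  calc L.sigmaRatio δ ξ = φ ξ / ξ ^ 2 := by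
        rw [sigmaRatio, L.sigma_eq_mul_sigmaProd ξ, mul_pow, mul_comm (ξ ^ 2), ← div_div]
    _ = -L.sigma δ ^ 2 / ξ ^ 2 + g ξ := by
        rw [hξ, hφ0, add_div, smul_eq_mul, mul_div_cancel_left₀ _ (pow_ne_zero 2 hξ0)]

theorem sigma_add_mul_sigma_sub {ξ δ : ℂ} (hξ : ξ ∉ L.lattice) (hδ : δ ∉ L.lattice) :
    L.sigma (ξ + δ) * L.sigma (ξ - δ) =
      -L.sigma δ ^ 2 * (L.sigma ξ ^ 2 * (L.wp ξ - L.wp δ)) := by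
  obtain ⟨g, hg, hratio⟩ := L.exists_sigmaRatio_eq δ
  let f : ℂ → ℂ := fun z ↦ L.sigmaRatio δ z + L.sigma δ ^ 2 * ℘[L.toPeriodPair] z
  have hdiff : DifferentiableOn ℂ f (L.lattice : Set ℂ)ᶜ :=
    (L.differentiableOn_sigmaRatio δ).add
      (L.toPeriodPair.differentiableOn_weierstrassP.const_mul _)
  have hper (l : L.lattice) : f.Periodic l := fun z ↦ by
    simp only [f, L.periodic_sigmaRatio δ l z, L.toPeriodPair.weierstrassP_add_coe]
  have hremovable : f =ᶠ[𝓝[≠] 0] fun z ↦ g z + L.sigma δ ^ 2 * ℘[L.toPeriodPair - (0 : ℂ)] z := by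
    filter_upwards [hratio] with z hz
    simp only [f, hz, weierstrassP_eq_one_div_sq_add]
    ring
  have hgdiff : DifferentiableAt ℂ
      (fun z ↦ g z + L.sigma δ ^ 2 * ℘[L.toPeriodPair - (0 : ℂ)] z) 0 :=
    (hg.add (analyticAt_const.mul
      (L.toPeriodPair.analyticAt_weierstrassPExcept 0))).differentiableAt
  have hfδ : f ξ = f δ :=
    apply_eq_apply_of_periodic_of_removable L.toPeriodPair hdiff hper hgdiff hremovable hξ hδ
  have hratioδ : L.sigmaRatio δ δ = 0 := by
    simp [sigmaRatio, L.sigma_eq_zero_iff.mpr (zero_mem _)]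
  have hσξ : L.sigma ξ ≠ 0 := L.sigma_ne_zero hξ
  simp only [f, hratioδ, zero_add, ← L.wp_eq_weierstrassP hξ, ← L.wp_eq_weierstrassP hδ] at hfδ
  rw [sigmaRatio] at hfδ
  field_simp at hfδ
  linear_combination hfδ

theorem zeta_add_add_zeta_sub {ξ δ : ℂ} (hξ : ξ ∉ L.lattice) (hδ : δ ∉ L.lattice)
    (hne : L.wp ξ ≠ L.wp δ) :
    L.zeta (ξ + δ) + L.zeta (ξ - δ) = 2 * L.zeta ξ + deriv L.wp ξ / (L.wp ξ - L.wp δ) := by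
  have hσ := L.differentiable_sigma
  have hσξ : L.sigma ξ ^ 2 ≠ 0 := pow_ne_zero 2 (L.sigma_ne_zero hξ)
  have hσδ : -L.sigma δ ^ 2 ≠ 0 := neg_ne_zero.mpr (pow_ne_zero 2 (L.sigma_ne_zero hδ))
  have hwp : L.wp ξ - L.wp δ ≠ 0 := sub_ne_zero.mpr hne
  have hprod : L.sigma (ξ + δ) * L.sigma (ξ - δ) ≠ 0 := by
    rw [L.sigma_add_mul_sigma_sub hξ hδ]
    exact mul_ne_zero hσδ (mul_ne_zero hσξ hwp)
  have hidentity : (fun z ↦ L.sigma (z + δ) * L.sigma (z - δ)) =ᶠ[𝓝 ξ]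
      fun z ↦ -L.sigma δ ^ 2 * (L.sigma z ^ 2 * (L.wp z - L.wp δ)) :=
    (eventually_of_mem (L.compl_lattice_mem_nhds hξ)) fun z hz ↦ L.sigma_add_mul_sigma_sub hz hδ
  calc L.zeta (ξ + δ) + L.zeta (ξ - δ)
      = logDeriv (fun z ↦ L.sigma (z + δ) * L.sigma (z - δ)) ξ := by
        rw [logDeriv_mul ξ (left_ne_zero_of_mul hprod) (right_ne_zero_of_mul hprod) (by fun_prop)
          (by fun_prop), logDeriv_apply, logDeriv_apply, deriv_comp_add_const,
          deriv_comp_sub_const, zeta, zeta]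
    _ = logDeriv (fun z ↦ L.sigma z ^ 2 * (L.wp z - L.wp δ)) ξ := by
        rw [(logDeriv_congr_nhds hidentity).self_of_nhds, logDeriv_const_mul ξ _ hσδ]
    _ = 2 * L.zeta ξ + deriv L.wp ξ / (L.wp ξ - L.wp δ) := by
        rw [logDeriv_mul ξ hσξ hwp (by fun_prop) ((L.differentiableAt_wp hξ).sub_const _),
          logDeriv_fun_pow (hσ ξ), zeta_eq_logDeriv_sigma, logDeriv_apply (fun z ↦ _ - _),
          deriv_sub_const]
        norm_cast

end EllLattice

/-- The coefficient `η_δ(ξ) = ζ(ξ+δ) − ζ(ξ) − ζ(δ)` equals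
`(1/2)·(℘′(ξ) − ℘′(δ))/(℘(ξ) − ℘(δ))`. -/
theorem eta_eq_wp_ratio (L : EllLattice) (ξ δ : ℂ)
    (hξ : ¬ L.mem ξ) (hδ : ¬ L.mem δ) (hξδ : ¬ L.mem (ξ + δ))
    (hne : L.wp ξ ≠ L.wp δ) :
    L.zeta (ξ + δ) - L.zeta ξ - L.zeta δ =
      (1 / 2) * (deriv L.wp ξ - deriv L.wp δ) / (L.wp ξ - L.wp δ) := by
  rw [L.mem_iff_mem_lattice] at hξ hδ
  have hξδ_sub := L.zeta_add_add_zeta_sub hξ hδ hne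
  have hδξ_sub := L.zeta_add_add_zeta_sub hδ hξ hne.symm
  have hodd : L.zeta (δ - ξ) = -L.zeta (ξ - δ) := by rw [← neg_sub, L.zeta_neg]
  rw [hodd, add_comm δ ξ, ← neg_sub (L.wp ξ), div_neg] at hδξ_sub
  rw [mul_div_assoc, sub_div]
  linear_combination (hξδ_sub + hδξ_sub) / 2
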